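/- For every real number x ≥ 1 and every real ε with 0 < ε < 1/2, one has x^((1+ε)/2) − (x − x^(1−ε)/2)^((1+ε)/2) ≥ ((1+ε)/8)·x^((1−ε)/2). -/

import Mathlib

/-! Concavity of `t ↦ t ^ p` for `p = (1 + ε) / 2` puts its graph below the tangent at `x`, so
lowering the argument from `x` by `x ^ (1 - ε) / 2` lowers the power by at least
`p * x ^ (p - 1) * (x ^ (1 - ε) / 2) = (1 + ε) / 4 * x ^ ((1 - ε) / 2)`. -/

theorem rpow_le_rpow_add_mul_sub {x y p : ℝ} (hx : 0 < x) (hy : 0 ≤ y) (hp₀ : 0 ≤ p)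
    (hp₁ : p ≤ 1) : y ^ p ≤ x ^ p + p * x ^ (p - 1) * (y - x) := by
  have bernoulli : (1 + (y / x - 1)) ^ p ≤ 1 + p * (y / x - 1) :=
    rpow_one_add_le_one_add_mul_self (by linarith [div_nonneg hy hx.le]) hp₀ hp₁
  calc
    y ^ p = x ^ p * (1 + (y / x - 1)) ^ p := by
      rw [add_sub_cancel, ← Real.mul_rpow hx.le (div_nonneg hy hx.le), mul_div_cancel₀ y hx.ne']
    _ ≤ x ^ p * (1 + p * (y / x - 1)) := by gcongr
    _ = x ^ p + p * x ^ (p - 1) * (y - x) := by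
      rw [Real.rpow_sub_one hx.ne']
      field_simp

theorem rpow_one_sub_div_two_le_self {x ε : ℝ} (hx : 1 ≤ x) (hε : 0 ≤ ε) :
    x ^ (1 - ε) / 2 ≤ x := by
  have power_le : x ^ (1 - ε) ≤ x := Real.rpow_le_self_of_one_le hx (sub_le_self 1 hε)
  linarith

theorem eflh_recursion_estimate_general {x ε : ℝ} (hx : 0 < x) (hε₀ : -1 ≤ ε) (hε₁ : ε ≤ 1)
    (hbase : x ^ (1 - ε) / 2 ≤ x) :
    (1 + ε) / 4 * x ^ ((1 - ε) / 2) ≤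
      x ^ ((1 + ε) / 2) - (x - x ^ (1 - ε) / 2) ^ ((1 + ε) / 2) := by
  have tangent := rpow_le_rpow_add_mul_sub (p := (1 + ε) / 2) hx (sub_nonneg.2 hbase)
    (by linarith) (by linarith)
  have exponents : x ^ ((1 + ε) / 2 - 1) * x ^ (1 - ε) = x ^ ((1 - ε) / 2) := by
    rw [← Real.rpow_add hx]
    ring_nf
  rw [← exponents]
  linarith

/-- The main estimate in the proof of the generalized recursion inequality
(Lemma C.1) of the paper. -/
theorem eflh_recursion_estimate (x : ℝ) (hx : 1 ≤ x) (ε : ℝ) (hε : 0 < ε)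
    (hε' : ε < 1 / 2) :
    x ^ ((1 + ε) / 2) - (x - x ^ (1 - ε) / 2) ^ ((1 + ε) / 2) ≥
      (1 + ε) / 8 * x ^ ((1 - ε) / 2) :=
  le_trans (by gcongr; norm_num) <| eflh_recursion_estimate_general (by linarith) (by linarith)
    (by linarith) (rpow_one_sub_div_two_le_self hx hε.le)
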